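/- Let k ≥ 2 be an integer and let α > 1/k, r > 0 and 0 < p ≤ (k-1)/k be real constants with r < r_cr = -α/ln(1-p). Let N denote the number of satisfying assignments of a random RB(k,n,α,r,p) instance, let t be any fixed total assignment, and let E_f[N] = E[N·1_{t ∈ S}]/Pr[t ∈ S] be the expected number of solutions of instances forced to have solution t (the model conditioned on t being a solution). Then E_f[N]/E[N] → 1 as n → ∞; that is, below the threshold the forcing strategy asymptotically does not change the expected number of solutions. -/

import Mathlib

namespace RB

/-- A (raw) constraint over `n` variables with common domain `Fin d`:
a scope (set of variables) together with a set of forbidden tuples,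
i.e. forbidden functions from the scope to the domain. -/
abbrev Constraint (n d : ℕ) : Type := Σ s : Finset (Fin n), Finset (↥s → Fin d)

/-- A constraint of model RB: scope of exactly `k` variables and exactly `q` forbidden tuples. -/
abbrev ValidConstraint (k n d q : ℕ) : Type :=
  {c : Constraint n d // c.1.card = k ∧ c.2.card = q}

/-- An instance of model RB: a sequence of `m` constraints (chosen with repetition). -/
abbrev Instance (k n d q m : ℕ) : Type := Fin m → ValidConstraint k n d q

/-- An assignment satisfies a constraint iff the tuple it induces on the scope is not forbidden. -/
def satisfies {n d : ℕ} (a : Fin n → Fin d) (c : Constraint n d) : Prop :=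
  (fun i : ↥c.1 => a i.1) ∉ c.2

/-- An assignment satisfies an instance iff it satisfies all its constraints. -/
def satInstance {k n d q m : ℕ} (a : Fin n → Fin d) (P : Instance k n d q m) : Prop :=
  ∀ i : Fin m, satisfies a (P i).1

open scoped Classical in
/-- The probability (uniform over instances, i.e. constraints chosen independently,
uniformly and with repetition) that a random instance is satisfiable. -/
noncomputable def prSat (k n d q m : ℕ) : ℝ :=
  ((Finset.univ.filter fun P : Instance k n d q m =>
      ∃ a : Fin n → Fin d, satInstance a P).card : ℝ)
    / (Fintype.card (Instance k n d q m))

/-- Domain size `d = ⌈n^α⌉`. -/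
noncomputable def dOf (α : ℝ) (n : ℕ) : ℕ := ⌈(n : ℝ) ^ α⌉₊

/-- Number of constraints `m = ⌈r · n · ln n⌉`. -/
noncomputable def mOf (r : ℝ) (n : ℕ) : ℕ := ⌈r * n * Real.log n⌉₊

/-- Number of forbidden tuples `q = ⌈p · d^k⌉`. -/
noncomputable def qOf (p : ℝ) (k d : ℕ) : ℕ := ⌈p * (d : ℝ) ^ k⌉₊

/-- Probability that a random instance of `RB(k,n,α,r,p)` is satisfiable. -/
noncomputable def prSatRB (k : ℕ) (α r p : ℝ) (n : ℕ) : ℝ :=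
  prSat k n (dOf α n) (qOf p k (dOf α n)) (mOf r n)

end RB

namespace RB

open scoped Classical in
/-- The number of satisfying assignments (solutions) of an instance. -/
noncomputable def numSolutions {k n d q m : ℕ} (P : Instance k n d q m) : ℕ :=
  (Finset.univ.filter fun a : Fin n → Fin d => satInstance a P).card

/-- The first moment `E[N]` of the number of solutions of a random instance
(uniform over instances, i.e. constraints chosen independently, uniformly and
with repetition). -/
noncomputable def expN (k n d q m : ℕ) : ℝ :=
  (∑ P : Instance k n d q m, (numSolutions P : ℝ)) / (Fintype.card (Instance k n d q m))

/-- The second moment `E[N²]` of the number of solutions of a random instance. -/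
noncomputable def expNsq (k n d q m : ℕ) : ℝ :=
  (∑ P : Instance k n d q m, (numSolutions P : ℝ) ^ 2) / (Fintype.card (Instance k n d q m))

open scoped Classical in
/-- The expected number of solutions `E_f[N] = E[N·1_{t ∈ S}] / Pr[t ∈ S]` of instances
forced to admit the assignment `t` as a solution, i.e. of the uniform model conditioned
on the event that `t` is a solution. -/
noncomputable def expNForced (k n d q m : ℕ) (t : Fin n → Fin d) : ℝ :=
  ((∑ P : Instance k n d q m, if satInstance t P then (numSolutions P : ℝ) else 0)
      / (Fintype.card (Instance k n d q m)))
    / (((Finset.univ.filter fun P : Instance k n d q m => satInstance t P).card : ℝ)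
      / (Fintype.card (Instance k n d q m)))

end RB

open Filter Topology

/-!
Interchanging values of single variables carries any assignment to any other, so `E_f[N]` is
independent of `t` and `E_f[N] / E[N] = E[N²] / E[N]²`, which is at least `1` by Cauchy–Schwarz.

For the upper bound, this ratio is the average over all assignments `a` of the `m`-th power of
the corresponding ratio for a single constraint. If `a` agrees with `t` on `s` variables, the
latter is at most `1 + c * (s / n) ^ k` for any `c > p / (1 - p)` and large `n`, and at most a
fraction `n.choose s / d ^ s` of all assignments has that many agreements. Choose `γ` with
`1 - α < γ < 1 - 1 / k`, which is possible because `1 / k < α`. When `s ≤ n ^ γ`, the `m`-th power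
is `1 + o(1)`. When `s > n ^ γ`, the fraction times the `m`-th power is at most `y n ^ s` with
`y n → 0`: since `p / (1 - p) ≤ k - 1`, the function `log (1 + c * x ^ k) / x` is increasing on
`(0, 1]` at `c = p / (1 - p)`, so that its largest value is `-log (1 - p)`, and
`r * -log (1 - p) < α`.
-/

namespace RB

open Finset
open scoped BigOperators

section Agreement

variable {ι β : Type*} [Fintype ι] [DecidableEq β]

/-- The set of variables on which the assignments `t` and `a` agree. The number of constraints
that both satisfy depends on `t` and `a` only through the size of this set. -/
def agreementSet (t a : ι → β) : Finset ι := {i | t i = a i}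

@[simp]
lemma mem_agreementSet {t a : ι → β} {i : ι} : i ∈ agreementSet t a ↔ t i = a i := by
  simp [agreementSet]

@[simp]
lemma agreementSet_self (t : ι → β) : agreementSet t t = univ := by
  ext i
  simp

variable [DecidableEq ι] [Fintype β]

lemma sum_agreementSet_eq {M : Type*} [AddCommMonoid M] (f : Finset ι → M) (t t' : ι → β) :
    ∑ a, f (agreementSet t a) = ∑ a, f (agreementSet t' a) := by
  refine Fintype.sum_equiv (Equiv.piCongrRight fun i => Equiv.swap (t i) (t' i)) _ _ fun a => ?_
  congr 1
  ext i
  rw [mem_agreementSet, mem_agreementSet, Equiv.piCongrRight_apply, Pi.map_apply,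
    ← Equiv.apply_eq_iff_eq (Equiv.swap (t i) (t' i)), Equiv.swap_apply_left]

lemma card_filter_subset_agreementSet (t : ι → β) (A : Finset ι) :
    #{a : ι → β | A ⊆ agreementSet t a} = Fintype.card β ^ (Fintype.card ι - #A) := by
  have hpi : ({a | A ⊆ agreementSet t a} : Finset (ι → β)) =
      Fintype.piFinset fun i => if i ∈ A then {t i} else univ := by
    ext a
    simp only [mem_filter_univ, subset_iff, mem_agreementSet, Fintype.mem_piFinset]
    refine forall_congr' fun i => ?_
    by_cases hi : i ∈ A <;> simp [hi, eq_comm]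
  rw [hpi, Fintype.card_piFinset]
  simp [apply_ite card, prod_ite, filter_not, card_sdiff_of_subset]

lemma card_filter_card_agreementSet_le (t : ι → β) (s : ℕ) :
    #{a : ι → β | #(agreementSet t a) = s} ≤
      (Fintype.card ι).choose s * Fintype.card β ^ (Fintype.card ι - s) := by
  have hcover : ({a | #(agreementSet t a) = s} : Finset (ι → β)) ⊆
      (powersetCard s univ).biUnion fun A => {a | A ⊆ agreementSet t a} := by
    intro a ha
    simp only [mem_biUnion, mem_filter_univ, mem_powersetCard_univ] at ha ⊢
    exact ⟨agreementSet t a, ha, Subset.rfl⟩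
  calc #{a : ι → β | #(agreementSet t a) = s}
      ≤ #(powersetCard s (univ : Finset ι)) * Fintype.card β ^ (Fintype.card ι - s) :=
        (card_le_card hcover).trans <| card_biUnion_le_card_mul _ _ _ fun A hA => by
          rw [card_filter_subset_agreementSet, mem_powersetCard_univ.1 hA]
    _ = _ := by rw [card_powersetCard, card_univ]

lemma expect_card_agreementSet_le (t : ι → β) {H : ℕ → ℝ} (hH : ∀ s, 0 ≤ H s) :
    𝔼 a, H #(agreementSet t a) ≤ ∑ s ∈ range (Fintype.card ι + 1),
      (Fintype.card ι).choose s / (Fintype.card β : ℝ) ^ s * H s := by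
  set n := Fintype.card ι
  set d := Fintype.card β
  have hfiber : ∑ a, H #(agreementSet t a) =
      ∑ s ∈ range (n + 1), (#{a : ι → β | #(agreementSet t a) = s} : ℝ) * H s := by
    rw [← sum_fiberwise_of_maps_to (t := range (n + 1))
      (g := fun a => #(agreementSet t a)) fun a _ => mem_range_succ_iff.2 (card_le_univ _)]
    refine sum_congr rfl fun s _ => ?_
    rw [← nsmul_eq_mul, ← sum_const]
    exact sum_congr rfl fun a ha => by rw [(mem_filter_univ a).1 ha]
  have hdn : (d : ℝ) ^ n ≠ 0 := by
    have : Nonempty (ι → β) := ⟨t⟩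
    exact_mod_cast Fintype.card_fun (α := ι) (β := β) ▸ Fintype.card_ne_zero (α := ι → β)
  rw [Fintype.expect_eq_sum_div_card, hfiber, sum_div, Fintype.card_fun, Nat.cast_pow]
  refine sum_le_sum fun s hs => ?_
  have hpow : (d : ℝ) ^ s * (d : ℝ) ^ (n - s) = (d : ℝ) ^ n :=
    pow_mul_pow_sub _ (mem_range_succ_iff.1 hs)
  have hds : (d : ℝ) ^ s ≠ 0 := left_ne_zero_of_mul (hpow ▸ hdn)
  have hdns : (d : ℝ) ^ (n - s) ≠ 0 := right_ne_zero_of_mul (hpow ▸ hdn)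
  calc (#{a : ι → β | #(agreementSet t a) = s} : ℝ) * H s / (d : ℝ) ^ n
      ≤ (n.choose s * (d : ℝ) ^ (n - s)) * H s / (d : ℝ) ^ n := by
        gcongr
        · exact hH s
        · exact_mod_cast card_filter_card_agreementSet_le t s
    _ = n.choose s / (d : ℝ) ^ s * H s := by
        rw [← hpow]
        field_simp

lemma expect_card_agreementSet_le_add (t : ι → β) {G : ℕ → ℝ} (hG : ∀ s, 0 ≤ G s) {M y θ : ℝ}
    (hθ : 0 ≤ θ) (hy₀ : 0 ≤ y) (hy₁ : y < 1) (hsmall : ∀ s : ℕ, s ≤ θ → G s ≤ M)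
    (hlarge : ∀ s ≤ Fintype.card ι, θ < s →
      (Fintype.card ι).choose s / (Fintype.card β : ℝ) ^ s * G s ≤ y ^ s) :
    𝔼 a, G #(agreementSet t a) ≤ M + y * (1 - y)⁻¹ := by
  have : Nonempty (ι → β) := ⟨t⟩
  set n := Fintype.card ι
  set tail : ℕ → ℝ := fun s => if θ < s then G s else 0
  have htail₀ : tail 0 = 0 := if_neg (by simpa using hθ)
  have htail : ∀ s, 0 ≤ tail s := fun s => by
    unfold tail
    split_ifs
    exacts [hG s, le_rfl]
  have hsplit : ∀ s, G s ≤ M + tail s := fun s => by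
    unfold tail
    split_ifs with h
    · exact le_add_of_nonneg_left ((hG 0).trans (hsmall 0 (by simpa using hθ)))
    · simpa using hsmall s (not_lt.1 h)
  have hterm : ∀ s ≤ n, n.choose s / (Fintype.card β : ℝ) ^ s * tail s ≤ y ^ s := fun s hs => by
    unfold tail
    split_ifs with h
    · exact hlarge s hs h
    · simpa using pow_nonneg hy₀ s
  calc 𝔼 a, G #(agreementSet t a)
      ≤ 𝔼 a, (M + tail #(agreementSet t a)) := expect_le_expect fun a _ => hsplit _
    _ = M + 𝔼 a, tail #(agreementSet t a) := by
        rw [expect_add_distrib, Fintype.expect_const]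
    _ ≤ M + ∑ s ∈ range (n + 1), n.choose s / (Fintype.card β : ℝ) ^ s * tail s := by
        gcongr
        exact expect_card_agreementSet_le t htail
    _ ≤ M + ∑ s ∈ range n, y ^ (s + 1) := by
        rw [sum_range_succ', htail₀, mul_zero, add_zero]
        gcongr with s hs
        exact hterm (s + 1) (mem_range.1 hs)
    _ ≤ M + y * (1 - y)⁻¹ := by
        simp_rw [pow_succ', ← mul_sum, ← tsum_geometric_of_lt_one hy₀ hy₁]
        gcongr
        exact (summable_geometric_of_lt_one hy₀ hy₁).sum_le_tsum _ fun i _ => pow_nonneg hy₀ i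

end Agreement
section Counting

variable {k n d q m : ℕ}

lemma restrict_eq_restrict_iff_subset_agreementSet {t a : Fin n → Fin d} {s : Finset (Fin n)} :
    s.restrict t = s.restrict a ↔ s ⊆ agreementSet t a := by
  simp [funext_iff, subset_iff]

open scoped Classical in
lemma card_filter_forall_satisfies (Z : Finset (Fin n → Fin d)) :
    #{c : ValidConstraint k n d q | ∀ z ∈ Z, satisfies z c.1} =
      ∑ s ∈ powersetCard k univ, (d ^ k - #(Z.image s.restrict)).choose q := by
  have hmap : ({c | ∀ z ∈ Z, satisfies z c.1} : Finset (ValidConstraint k n d q)).map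
      (Function.Embedding.subtype _) =
      (powersetCard k univ).sigma fun s => powersetCard q (Z.image s.restrict)ᶜ := by
    ext ⟨s, F⟩
    have havoid : F ⊆ (Z.image s.restrict)ᶜ ↔ ∀ z ∈ Z, satisfies z ⟨s, F⟩ := by
      rw [subset_compl_iff_disjoint_right, disjoint_right, forall_mem_image]
      rfl
    simp only [Finset.mem_map, mem_filter_univ, Function.Embedding.subtype_apply, Subtype.exists,
      exists_and_left, exists_prop, exists_eq_right_right, mem_sigma, mem_powersetCard,
      subset_univ, true_and, havoid]
    tauto
  rw [← card_map, hmap, card_sigma]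
  refine sum_congr rfl fun s hs => ?_
  rw [card_powersetCard, card_compl, Fintype.card_fun, Fintype.card_fin, Fintype.card_coe,
    mem_powersetCard_univ.1 hs]

open scoped Classical in
lemma card_filter_forall_satInstance (Z : Finset (Fin n → Fin d)) :
    #{P : Instance k n d q m | ∀ z ∈ Z, satInstance z P} =
      #{c : ValidConstraint k n d q | ∀ z ∈ Z, satisfies z c.1} ^ m := by
  have hpi : ({P | ∀ z ∈ Z, satInstance z P} : Finset (Instance k n d q m)) =
      Fintype.piFinset fun _ => {c | ∀ z ∈ Z, satisfies z c.1} := by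
    ext P
    simp only [mem_filter_univ, Fintype.mem_piFinset]
    exact ⟨fun h i z hz => h z hz i, fun h z hz i => h i z hz⟩
  rw [hpi, Fintype.card_piFinset_const]

/-- The number of constraints satisfied by both of two assignments that agree on exactly `s`
variables. The two assignments induce a single tuple on a scope inside their agreement set, and
two distinct tuples on any other scope. -/
def jointCount (k n d q s : ℕ) : ℕ :=
  s.choose k * (d ^ k - 1).choose q + (n.choose k - s.choose k) * (d ^ k - 2).choose q

open scoped Classical in
lemma card_filter_satisfies_and (t a : Fin n → Fin d) :
    #{c : ValidConstraint k n d q | satisfies t c.1 ∧ satisfies a c.1} =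
      jointCount k n d q #(agreementSet t a) := by
  have hinside : ({s ∈ powersetCard k univ | s ⊆ agreementSet t a} : Finset (Finset (Fin n))) =
      powersetCard k (agreementSet t a) := by
    ext s
    simp [mem_powersetCard, and_comm]
  have houtside : #{s ∈ powersetCard k (univ : Finset (Fin n)) | ¬ s ⊆ agreementSet t a} =
      n.choose k - (#(agreementSet t a)).choose k := by
    rw [filter_not, card_sdiff_of_subset (filter_subset _ _), hinside, card_powersetCard,
      card_powersetCard, card_univ, Fintype.card_fin]
  have htuples (s : Finset (Fin n)) : #(({t, a} : Finset (Fin n → Fin d)).image s.restrict) =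
      if s ⊆ agreementSet t a then 1 else 2 := by
    rw [image_insert, image_singleton]
    split_ifs with h
    · simp [restrict_eq_restrict_iff_subset_agreementSet.2 h]
    · exact card_pair (mt restrict_eq_restrict_iff_subset_agreementSet.1 h)
  have hpair := card_filter_forall_satisfies (k := k) (q := q) {t, a}
  simp only [mem_insert, mem_singleton, forall_eq_or_imp, forall_eq] at hpair
  simp_rw [hpair, htuples, apply_ite (fun j => (d ^ k - j).choose q), sum_ite, sum_const,
    hinside, houtside, card_powersetCard, smul_eq_mul, jointCount]

open scoped Classical in
lemma card_filter_satInstance_and (t a : Fin n → Fin d) :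
    #{P : Instance k n d q m | satInstance t P ∧ satInstance a P} =
      jointCount k n d q #(agreementSet t a) ^ m := by
  simpa [card_filter_satisfies_and] using
    card_filter_forall_satInstance (k := k) (q := q) (m := m) {t, a}

open scoped Classical in
lemma card_filter_satInstance (t : Fin n → Fin d) :
    #{P : Instance k n d q m | satInstance t P} = (n.choose k * (d ^ k - 1).choose q) ^ m := by
  simpa [jointCount] using card_filter_satInstance_and (k := k) (q := q) (m := m) t t

lemma card_instance :
    Fintype.card (Instance k n d q m) = (n.choose k * (d ^ k).choose q) ^ m := by
  have hall := card_filter_forall_satisfies (k := k) (n := n) (d := d) (q := q) ∅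
  simp only [notMem_empty, false_imp_iff, implies_true, filter_true, image_empty, card_empty,
    tsub_zero, sum_const, card_powersetCard, card_univ, Fintype.card_fin, smul_eq_mul] at hall
  rw [Fintype.card_fun, Fintype.card_fin, hall]

end Counting

section Moments

variable {k n d q m : ℕ}

open scoped Classical in
lemma numSolutions_eq_sum (P : Instance k n d q m) :
    (numSolutions P : ℝ) = ∑ a, if satInstance a P then 1 else 0 := by
  rw [numSolutions, natCast_card_filter]

lemma sum_numSolutions :
    ∑ P : Instance k n d q m, (numSolutions P : ℝ) =
      (d : ℝ) ^ n * (n.choose k * (d ^ k - 1).choose q : ℝ) ^ m := by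
  simp_rw [numSolutions_eq_sum]
  rw [sum_comm]
  simp_rw [← natCast_card_filter, card_filter_satInstance]
  simp

open scoped Classical in
lemma sum_ite_satInstance_numSolutions (t : Fin n → Fin d) :
    (∑ P : Instance k n d q m, if satInstance t P then (numSolutions P : ℝ) else 0) =
      ∑ a, (jointCount k n d q #(agreementSet t a) : ℝ) ^ m := by
  simp_rw [← Nat.cast_pow, ← card_filter_satInstance_and, natCast_card_filter, ite_and]
  rw [sum_comm]
  refine sum_congr rfl fun P _ => ?_
  split_ifs
  · exact numSolutions_eq_sum P
  · exact sum_const_zero.symm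

open scoped Classical in
lemma sum_numSolutions_sq (t : Fin n → Fin d) :
    ∑ P : Instance k n d q m, (numSolutions P : ℝ) ^ 2 =
      (d : ℝ) ^ n * ∑ P : Instance k n d q m,
        if satInstance t P then (numSolutions P : ℝ) else 0 := by
  have hforced (t' : Fin n → Fin d) :
      (∑ P : Instance k n d q m, if satInstance t' P then (numSolutions P : ℝ) else 0) =
        ∑ P : Instance k n d q m, if satInstance t P then (numSolutions P : ℝ) else 0 := by
    rw [sum_ite_satInstance_numSolutions, sum_ite_satInstance_numSolutions,
      sum_agreementSet_eq (fun A => (jointCount k n d q #A : ℝ) ^ m) t' t]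
  calc ∑ P : Instance k n d q m, (numSolutions P : ℝ) ^ 2
      = ∑ P : Instance k n d q m, ∑ t', if satInstance t' P then (numSolutions P : ℝ) else 0 := by
        refine sum_congr rfl fun P _ => ?_
        rw [sq, numSolutions_eq_sum, sum_mul, ← numSolutions_eq_sum]
        simp only [ite_mul, one_mul, zero_mul]
    _ = _ := by
        rw [sum_comm, sum_congr rfl fun t' _ => hforced t']
        simp

lemma expNForced_eq_expNsq_div_expN (t : Fin n → Fin d) :
    expNForced k n d q m t = expNsq k n d q m / expN k n d q m := by
  have hdn : (d : ℝ) ^ n ≠ 0 := by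
    have : Nonempty (Fin n → Fin d) := ⟨t⟩
    simpa using (Nat.cast_ne_zero (R := ℝ)).2 (Fintype.card_ne_zero (α := Fin n → Fin d))
  rw [expNForced, expNsq, expN, sum_numSolutions, sum_numSolutions_sq t,
    card_filter_satInstance, mul_div_assoc _ _ (Fintype.card (Instance k n d q m) : ℝ),
    mul_div_assoc _ _ (Fintype.card (Instance k n d q m) : ℝ), mul_div_mul_left _ _ hdn]
  push_cast
  rfl

lemma expN_sq_le_expNsq : expN k n d q m ^ 2 ≤ expNsq k n d q m := by
  simpa only [expN, expNsq, card_univ] using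
    sum_div_card_sq_le_sum_sq_div_card (s := univ)
      (f := fun P : Instance k n d q m => (numSolutions P : ℝ))

lemma expN_pos (hd : 0 < d) (hkn : k ≤ n) (hq : q < d ^ k) : 0 < expN k n d q m := by
  have h₀ := Nat.choose_pos hkn
  have h₁ := Nat.choose_pos (Nat.le_sub_one_of_lt hq)
  have h₂ := Nat.choose_pos hq.le
  rw [expN, sum_numSolutions, card_instance]
  positivity

lemma one_le_expNForced_div_expN (t : Fin n → Fin d) (hd : 0 < d) (hkn : k ≤ n) (hq : q < d ^ k) :
    1 ≤ expNForced k n d q m t / expN k n d q m := by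
  have hpos := expN_pos (m := m) hd hkn hq
  rw [expNForced_eq_expNsq_div_expN, div_div, ← sq, one_le_div (by positivity)]
  exact expN_sq_le_expNsq

lemma expNForced_div_expN_eq_expect (t : Fin n → Fin d) :
    expNForced k n d q m t / expN k n d q m =
      𝔼 a, ((jointCount k n d q #(agreementSet t a) : ℝ) * (n.choose k * (d ^ k).choose q) /
        (n.choose k * (d ^ k - 1).choose q) ^ 2) ^ m := by
  simp_rw [div_pow, mul_pow, ← expect_div, ← expect_mul]
  rw [expNForced, expN, sum_numSolutions, sum_ite_satInstance_numSolutions,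
    Fintype.expect_eq_sum_div_card, card_filter_satInstance, card_instance]
  simp only [Fintype.card_fun, Fintype.card_fin]
  push_cast
  field_simp
  ring

end Moments

section PairRatio

lemma choose_mul_choose_add_two_le_sq (N q : ℕ) :
    N.choose q * (N + 2).choose q ≤ (N + 1).choose q ^ 2 := by
  rcases lt_or_ge N q with hq | hq
  · simp [Nat.choose_eq_zero_of_lt hq]
  have h₁ := Nat.choose_mul_succ_eq N q
  have h₂ := Nat.choose_mul_succ_eq (N + 1) q
  have hpos : 0 < (N + 1) * (N + 2 - q) := Nat.mul_pos N.succ_pos (by omega)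
  refine Nat.le_of_mul_le_mul_left ?_ hpos
  calc (N + 1) * (N + 2 - q) * (N.choose q * (N + 2).choose q)
      = (N.choose q * (N + 1)) * ((N + 2).choose q * (N + 2 - q)) := by ring
    _ = (N + 1).choose q ^ 2 * ((N + 1 - q) * (N + 2)) := by rw [h₁, ← h₂]; ring
    _ ≤ (N + 1).choose q ^ 2 * ((N + 1) * (N + 2 - q)) := by
        refine Nat.mul_le_mul_left _ ?_
        rw [Nat.sub_add_comm hq, Nat.sub_add_comm hq]
        nlinarith [N.sub_le q]
    _ = (N + 1) * (N + 2 - q) * (N + 1).choose q ^ 2 := mul_comm _ _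

lemma descFactorial_mul_pow_le {s n : ℕ} (hs : s ≤ n) (k : ℕ) :
    s.descFactorial k * n ^ k ≤ n.descFactorial k * s ^ k := by
  induction k with
  | zero => simp
  | succ k ih =>
    have hstep : (s - k) * n ≤ (n - k) * s := by
      rw [Nat.sub_mul, Nat.sub_mul, mul_comm s n]
      exact Nat.sub_le_sub_left (Nat.mul_le_mul_left k hs) _
    calc s.descFactorial (k + 1) * n ^ (k + 1)
        = (s - k) * n * (s.descFactorial k * n ^ k) := by rw [Nat.descFactorial_succ]; ring
      _ ≤ (n - k) * s * (n.descFactorial k * s ^ k) := Nat.mul_le_mul hstep ih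
      _ = n.descFactorial (k + 1) * s ^ (k + 1) := by rw [Nat.descFactorial_succ]; ring

lemma choose_div_choose_le_div_pow {s n k : ℕ} (hs : s ≤ n) (hkn : k ≤ n) :
    (s.choose k / n.choose k : ℝ) ≤ (s / n : ℝ) ^ k := by
  have hchoose : (0 : ℝ) < n.choose k := by exact_mod_cast Nat.choose_pos hkn
  have hpow : (0 : ℝ) < (n : ℝ) ^ k := by
    exact_mod_cast (Nat.descFactorial_pos.2 hkn).trans_le (Nat.descFactorial_le_pow n k)
  rw [div_pow, div_le_div_iff₀ hchoose hpow, mul_comm ((s : ℝ) ^ k)]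
  norm_cast
  refine Nat.le_of_mul_le_mul_left ?_ k.factorial_pos
  simpa only [← mul_assoc, ← Nat.descFactorial_eq_factorial_mul_choose] using
    descFactorial_mul_pow_le hs k

lemma jointCount_mul_div_sq_le {k n d q s : ℕ} (hkn : k ≤ n) (hs : s ≤ n) (hd : 2 ≤ d ^ k)
    (hq : q < d ^ k) :
    (jointCount k n d q s : ℝ) * (n.choose k * (d ^ k).choose q) /
        (n.choose k * (d ^ k - 1).choose q) ^ 2 ≤
      1 + q / ((d : ℝ) ^ k - q) * (s / n : ℝ) ^ k := by
  obtain ⟨N, hN⟩ : ∃ N, d ^ k = N + 2 := Nat.exists_eq_add_of_le' hd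
  have hdk : (d : ℝ) ^ k = N + 2 := by exact_mod_cast hN
  rw [hN] at hq
  have hqN : (0 : ℝ) < N + 2 - q := sub_pos.2 (by exact_mod_cast hq)
  have hC : (0 : ℝ) < n.choose k := by exact_mod_cast Nat.choose_pos hkn
  have hY : (0 : ℝ) < (N + 1).choose q := by exact_mod_cast Nat.choose_pos (Nat.lt_succ_iff.1 hq)
  have hXY : ((N + 2).choose q : ℝ) / (N + 1).choose q = 1 + q / (N + 2 - q) := by
    have h := Nat.choose_mul_succ_eq (N + 1) q
    rw [← Nat.cast_inj (R := ℝ)] at h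
    push_cast [hq.le] at h
    rw [div_eq_iff hY.ne', one_add_div hqN.ne', div_mul_eq_mul_div, eq_div_iff hqN.ne']
    linear_combination -h
  have hXZ : (N.choose q * (N + 2).choose q : ℝ) / (N + 1).choose q ^ 2 ≤ 1 :=
    div_le_one_of_le₀ (by exact_mod_cast choose_mul_choose_add_two_le_sq N q) (by positivity)
  set σ : ℝ := s.choose k / n.choose k with hσ
  have hσ₁ : σ ≤ 1 := div_le_one_of_le₀ (by exact_mod_cast Nat.choose_mono k hs) hC.le
  calc (jointCount k n d q s : ℝ) * (n.choose k * (d ^ k).choose q) /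
        (n.choose k * (d ^ k - 1).choose q) ^ 2
      = σ * ((N + 2).choose q / (N + 1).choose q) +
          (1 - σ) * (N.choose q * (N + 2).choose q / (N + 1).choose q ^ 2) := by
        rw [jointCount, hN, hσ]
        push_cast [Nat.choose_mono k hs]
        field_simp
    _ ≤ σ * (1 + q / (N + 2 - q)) + (1 - σ) * 1 := by
        rw [hXY]
        gcongr
    _ = 1 + q / (N + 2 - q) * σ := by ring
    _ ≤ 1 + q / ((d : ℝ) ^ k - q) * (s / n : ℝ) ^ k := by
        rw [hdk]
        gcongr
        exact choose_div_choose_le_div_pow hs hkn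

lemma expNForced_div_expN_le_expect {k n d q m : ℕ} {c : ℝ} (t : Fin n → Fin d) (hkn : k ≤ n)
    (hd : 2 ≤ d ^ k) (hq : q < d ^ k) (hc : q / ((d : ℝ) ^ k - q) ≤ c) :
    expNForced k n d q m t / expN k n d q m ≤
      𝔼 a, (1 + c * (#(agreementSet t a) / n : ℝ) ^ k) ^ m := by
  rw [expNForced_div_expN_eq_expect]
  refine expect_le_expect fun a _ => pow_le_pow_left₀ (by positivity) ?_ m
  have hs : #(agreementSet t a) ≤ n := (card_le_univ _).trans_eq (Fintype.card_fin n)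
  calc _ ≤ 1 + q / ((d : ℝ) ^ k - q) * (#(agreementSet t a) / n : ℝ) ^ k :=
        jointCount_mul_div_sq_le hkn hs hd hq
    _ ≤ _ := by gcongr

end PairRatio

section Rate

open Real

lemma log_one_add_le_self {u : ℝ} (hu : -1 < u) : log (1 + u) ≤ u := by
  linarith [log_le_sub_one_of_pos (show 0 < 1 + u by linarith)]

lemma monotoneOn_log_one_add_mul_pow_div {k : ℕ} {c : ℝ} (hc₀ : 0 ≤ c) (hc : c ≤ k - 1) :
    MonotoneOn (fun x : ℝ => log (1 + c * x ^ k) / x) (Set.Ioc 0 1) := by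
  have hk : k ≠ 0 := Nat.cast_ne_zero.1 (by linarith : (0 : ℝ) < k).ne'
  have hderiv {x : ℝ} (hx : 0 < x) : HasDerivAt (fun x : ℝ => log (1 + c * x ^ k) / x)
      ((c * (k * x ^ (k - 1)) / (1 + c * x ^ k) * x - log (1 + c * x ^ k) * 1) / x ^ 2) x :=
    ((((hasDerivAt_pow k x).const_mul c).const_add 1).log (by positivity)).div (hasDerivAt_id x)
      hx.ne'
  refine monotoneOn_of_deriv_nonneg (convex_Ioc 0 1)
    (fun x hx => (hderiv hx.1).continuousAt.continuousWithinAt)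
    (fun x hx => (hderiv (interior_subset hx).1).differentiableAt.differentiableWithinAt)
    fun x hx => ?_
  obtain ⟨hx₀, hx₁⟩ := interior_subset hx
  rw [(hderiv hx₀).deriv]
  refine div_nonneg (sub_nonneg.2 ?_) (sq_nonneg x)
  set u := c * x ^ k with hu
  have hu₀ : 0 ≤ u := by positivity
  have huk : 1 + u ≤ k := by
    linarith [mul_le_of_le_one_right hc₀ (pow_le_one₀ (n := k) hx₀.le hx₁)]
  calc log (1 + u) * 1 ≤ u := (mul_one _).trans_le (log_one_add_le_self (by linarith))
    _ ≤ k * u / (1 + u) := by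
        rw [le_div_iff₀ (by positivity), mul_comm]
        gcongr
    _ = c * (k * x ^ (k - 1)) / (1 + u) * x := by
        rw [hu, ← pow_sub_one_mul hk x]
        ring

/-- The chord bound `log (1 + c * x ^ k) ≤ log (1 + c) * x` can fail for coefficients above
`k - 1`, so the excess `δ` over an admissible `c` is treated as a perturbation. -/
lemma log_one_add_add_mul_pow_le {k : ℕ} {c δ x : ℝ} (hc₀ : 0 ≤ c) (hc : c ≤ k - 1) (hδ : 0 ≤ δ)
    (hx₀ : 0 < x) (hx₁ : x ≤ 1) :
    log (1 + (c + δ) * x ^ k) ≤ (log (1 + c) + δ) * x := by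
  have hk : k ≠ 0 := Nat.cast_ne_zero.1 (by linarith : (0 : ℝ) < k).ne'
  have hchord : log (1 + c * x ^ k) ≤ log (1 + c) * x := by
    have h := monotoneOn_log_one_add_mul_pow_div hc₀ hc ⟨hx₀, hx₁⟩ ⟨one_pos, le_rfl⟩ hx₁
    simp only [one_pow, mul_one, div_one] at h
    rwa [div_le_iff₀ hx₀] at h
  have hexcess : log (1 + δ * x ^ k) ≤ δ * x :=
    (log_one_add_le_self (neg_one_lt_zero.trans_le (by positivity))).trans <|
      mul_le_mul_of_nonneg_left (pow_le_of_le_one hx₀.le hx₁ hk) hδ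
  calc log (1 + (c + δ) * x ^ k)
      ≤ log ((1 + c * x ^ k) * (1 + δ * x ^ k)) := by
        have h : 0 ≤ c * x ^ k * (δ * x ^ k) := by positivity
        exact log_le_log (by positivity) (by linarith)
    _ = log (1 + c * x ^ k) + log (1 + δ * x ^ k) :=
        log_mul (by positivity) (by positivity)
    _ ≤ (log (1 + c) + δ) * x := by linarith

lemma log_one_add_mul_pow_le_of_le {k : ℕ} (hk : 2 ≤ k) {c x ε : ℝ} (hc : 0 ≤ c) (hx₀ : 0 ≤ x)
    (hx₁ : x ≤ 1) (hxε : x ≤ ε) : log (1 + c * x ^ k) ≤ c * ε * x :=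
  calc log (1 + c * x ^ k) ≤ c * x ^ k :=
        log_one_add_le_self (neg_one_lt_zero.trans_le (by positivity))
    _ ≤ c * x ^ 2 := mul_le_mul_of_nonneg_left (pow_le_pow_of_le_one hx₀ hx₁ hk) hc
    _ ≤ c * ε * x := by
        rw [sq, ← mul_assoc]
        gcongr

end Rate

section Tail

open Real

lemma choose_le_exp_mul_div_pow (n : ℕ) {s : ℕ} (hs : 0 < s) :
    (n.choose s : ℝ) ≤ (exp 1 * (n / s)) ^ s := by
  calc (n.choose s : ℝ) ≤ n ^ s / s.factorial := Nat.choose_le_pow_div s n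
    _ = n ^ s / s ^ s * (s ^ s / s.factorial) := by field_simp
    _ ≤ n ^ s / s ^ s * exp s := by
        gcongr
        exact pow_div_factorial_le_exp s (by positivity) s
    _ = (exp 1 * (n / s)) ^ s := by
        rw [mul_pow, div_pow, ← exp_nat_mul, mul_one, mul_comm]

lemma choose_div_pow_mul_pow_le {n s d m : ℕ} {α ρ A B : ℝ} (hn : 0 < n) (hs : 0 < s)
    (hd : (n : ℝ) ^ α ≤ d) (hm : m ≤ ρ * n * log n) (hB : 1 ≤ B) (hlog : log B ≤ A * (s / n)) :
    n.choose s / (d : ℝ) ^ s * B ^ m ≤ (exp 1 * (n / s) * (n : ℝ) ^ (ρ * A - α)) ^ s := by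
  have hn' : (0 : ℝ) < n := by exact_mod_cast hn
  have hBm : B ^ m ≤ ((n : ℝ) ^ (ρ * A)) ^ s := by
    rw [← exp_log (zero_lt_one.trans_le hB), ← exp_nat_mul, rpow_def_of_pos hn', ← exp_nat_mul,
      exp_le_exp]
    calc m * log B ≤ (ρ * n * log n) * (A * (s / n)) :=
          mul_le_mul hm hlog (log_nonneg hB) (m.cast_nonneg.trans hm)
      _ = s * (log n * (ρ * A)) := by field_simp
  calc n.choose s / (d : ℝ) ^ s * B ^ m
      ≤ (exp 1 * (n / s)) ^ s / ((n : ℝ) ^ α) ^ s * ((n : ℝ) ^ (ρ * A)) ^ s := by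
        gcongr
        exact choose_le_exp_mul_div_pow n hs
    _ = (exp 1 * (n / s) * (n : ℝ) ^ (ρ * A - α)) ^ s := by
        rw [rpow_sub hn', ← div_pow, ← mul_pow]
        ring

lemma exists_tendsto_zero_forall_choose_div_pow_mul_le {k : ℕ} (hk : 2 ≤ k) {α ρ γ c A : ℝ}
    (hc : 0 ≤ c) (hγ : 1 - γ < α) (hA : ρ * A < α)
    (hlog : ∀ x ∈ Set.Ioc (0 : ℝ) 1, log (1 + c * x ^ k) ≤ A * x) :
    ∃ y : ℕ → ℝ, (∀ n, 0 ≤ y n) ∧ Tendsto y atTop (𝓝 0) ∧ ∀ n s d m : ℕ, s ≤ n →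
      (n : ℝ) ^ γ < s → (n : ℝ) ^ α ≤ d → m ≤ ρ * n * log n →
        n.choose s / (d : ℝ) ^ s * (1 + c * (s / n : ℝ) ^ k) ^ m ≤ y n ^ s := by
  obtain ⟨ε, hε, hγε⟩ := exists_pos_mul_lt (sub_pos.2 hγ) (ρ * c)
  refine ⟨fun n => exp 1 * (n : ℝ) ^ (1 - γ + (ρ * (c * ε) - α)) +
    exp 1 * (1 / ε) * (n : ℝ) ^ (ρ * A - α), fun n => by positivity, ?_, ?_⟩
  · have hvanish {b : ℝ} (hb : b < 0) : Tendsto (fun n : ℕ => (n : ℝ) ^ b) atTop (𝓝 0) := by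
      simpa only [neg_neg, Function.comp_def] using
        (tendsto_rpow_neg_atTop (neg_pos.2 hb)).comp (tendsto_natCast_atTop_atTop (R := ℝ))
    simpa using ((hvanish (by linarith : 1 - γ + (ρ * (c * ε) - α) < 0)).const_mul (exp 1)).add
      ((hvanish (sub_neg.2 hA)).const_mul (exp 1 * (1 / ε)))
  intro n s d m hsn hs hd hm
  have hs₀ : (0 : ℝ) < s := (by positivity : (0 : ℝ) ≤ (n : ℝ) ^ γ).trans_lt hs
  have hn₀ : (0 : ℝ) < n := hs₀.trans_le (by exact_mod_cast hsn)
  have hx : (s / n : ℝ) ∈ Set.Ioc (0 : ℝ) 1 :=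
    ⟨by positivity, div_le_one_of_le₀ (by exact_mod_cast hsn) hn₀.le⟩
  have hB : 1 ≤ 1 + c * (s / n : ℝ) ^ k := le_add_of_nonneg_right (by positivity)
  have hterm {A : ℝ} (hA : log (1 + c * (s / n : ℝ) ^ k) ≤ A * (s / n)) :=
    choose_div_pow_mul_pow_le (by exact_mod_cast hn₀) (by exact_mod_cast hs₀) hd hm hB hA
  rcases le_or_gt (s / n : ℝ) ε with hsmall | hlarge
  · have hrate := log_one_add_mul_pow_le_of_le hk hc hx.1.le hx.2 hsmall
    refine (hterm hrate).trans (pow_le_pow_left₀ (by positivity) ?_ s)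
    calc exp 1 * (n / s) * (n : ℝ) ^ (ρ * (c * ε) - α)
        ≤ exp 1 * (n : ℝ) ^ (1 - γ) * (n : ℝ) ^ (ρ * (c * ε) - α) := by
          gcongr
          rw [rpow_sub hn₀, rpow_one]
          gcongr
      _ = exp 1 * (n : ℝ) ^ (1 - γ + (ρ * (c * ε) - α)) := by rw [mul_assoc, ← rpow_add hn₀]
      _ ≤ _ := le_add_of_nonneg_right (by positivity)
  · refine (hterm (hlog _ hx)).trans (pow_le_pow_left₀ (by positivity) ?_ s)
    calc exp 1 * (n / s) * (n : ℝ) ^ (ρ * A - α)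
        ≤ exp 1 * (1 / ε) * (n : ℝ) ^ (ρ * A - α) := by
          gcongr exp 1 * ?_ * (n : ℝ) ^ (ρ * A - α)
          rw [← inv_div, one_div]
          gcongr
      _ ≤ _ := le_add_of_nonneg_left (by positivity)

lemma one_add_mul_div_pow_pow_le_exp {k n s m : ℕ} {γ c : ℝ} (hn : 0 < n) (hc : 0 ≤ c)
    (hs : s ≤ (n : ℝ) ^ γ) :
    (1 + c * (s / n : ℝ) ^ k) ^ m ≤ exp (c * (m * (n : ℝ) ^ ((γ - 1) * k))) := by
  have hn' : (0 : ℝ) < n := by exact_mod_cast hn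
  have hx : (s / n : ℝ) ^ k ≤ (n : ℝ) ^ ((γ - 1) * k) := by
    rw [rpow_mul_natCast hn'.le, rpow_sub_one hn'.ne']
    gcongr
  calc (1 + c * (s / n : ℝ) ^ k) ^ m ≤ exp (c * (n : ℝ) ^ ((γ - 1) * k)) ^ m := by
        gcongr
        rw [add_comm]
        exact (add_one_le_exp _).trans (exp_le_exp.2 (by gcongr))
    _ = exp (c * (m * (n : ℝ) ^ ((γ - 1) * k))) := by
        rw [← exp_nat_mul]
        ring_nf

end Tail

section Asymptotics

open Real

variable {k : ℕ} {α r p : ℝ}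

lemma tendsto_dOf_pow_atTop (hα : 0 < α) (hk : k ≠ 0) :
    Tendsto (fun n => (dOf α n : ℝ) ^ k) atTop atTop :=
  (tendsto_pow_atTop hk).comp <| tendsto_natCast_atTop_atTop.comp <|
    tendsto_nat_ceil_atTop.comp <| (tendsto_rpow_atTop hα).comp tendsto_natCast_atTop_atTop

lemma tendsto_qOf_div_pow (hα : 0 < α) (hk : k ≠ 0) (hp : 0 ≤ p) :
    Tendsto (fun n => (qOf p k (dOf α n) : ℝ) / (dOf α n : ℝ) ^ k) atTop (𝓝 p) :=
  (tendsto_nat_ceil_mul_div_atTop hp).comp (tendsto_dOf_pow_atTop hα hk)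

lemma eventually_qOf_lt (hα : 0 < α) (hk : k ≠ 0) (hp₀ : 0 ≤ p) (hp₁ : p < 1) :
    ∀ᶠ n in atTop, qOf p k (dOf α n) < dOf α n ^ k := by
  filter_upwards [(tendsto_qOf_div_pow hα hk hp₀).eventually_lt_const hp₁,
    (tendsto_dOf_pow_atTop hα hk).eventually_gt_atTop 0] with n hlt hd
  rw [div_lt_one hd] at hlt
  exact_mod_cast hlt

lemma tendsto_qOf_div_pow_sub (hα : 0 < α) (hk : k ≠ 0) (hp₀ : 0 ≤ p) (hp₁ : p < 1) :
    Tendsto (fun n => (qOf p k (dOf α n) : ℝ) / ((dOf α n : ℝ) ^ k - qOf p k (dOf α n))) atTop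
      (𝓝 (p / (1 - p))) := by
  have h := tendsto_qOf_div_pow hα hk hp₀
  refine (h.div (h.const_sub 1) (sub_pos.2 hp₁).ne').congr' ?_
  filter_upwards [(tendsto_dOf_pow_atTop hα hk).eventually_ne_atTop 0] with n hd
  rw [Pi.div_apply, one_sub_div hd, div_div_div_cancel_right₀ hd]

lemma eventually_mOf_le {ρ : ℝ} (hr : 0 ≤ r) (hρ : r < ρ) :
    ∀ᶠ n : ℕ in atTop, (mOf r n : ℝ) ≤ ρ * n * log n := by
  have hlarge : Tendsto (fun n : ℕ => (ρ - r) * (n * log n)) atTop atTop :=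
    ((tendsto_id.atTop_mul_atTop₀ tendsto_log_atTop).comp
      tendsto_natCast_atTop_atTop).const_mul_atTop (sub_pos.2 hρ)
  filter_upwards [hlarge.eventually_ge_atTop 1] with n hn
  have hceil : (mOf r n : ℝ) < r * n * log n + 1 :=
    Nat.ceil_lt_add_one (mul_nonneg (by positivity) (log_natCast_nonneg n))
  linarith

lemma tendsto_mOf_mul_rpow (hr : 0 ≤ r) {b : ℝ} (hb : b < -1) :
    Tendsto (fun n : ℕ => (mOf r n : ℝ) * (n : ℝ) ^ b) atTop (𝓝 0) := by
  have hlog : Tendsto (fun n : ℕ => (r + 1) * (log n / (n : ℝ) ^ (-(b + 1)))) atTop (𝓝 0) := by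
    simpa using ((isLittleO_log_rpow_atTop (by linarith : 0 < -(b + 1))).tendsto_div_nhds_zero.comp
      tendsto_natCast_atTop_atTop).const_mul (r + 1)
  refine squeeze_zero' (Eventually.of_forall fun n => by positivity) ?_ hlog
  filter_upwards [eventually_mOf_le hr (lt_add_one r), eventually_gt_atTop 0] with n hm hn
  have hn' : (0 : ℝ) < n := by exact_mod_cast hn
  calc (mOf r n : ℝ) * (n : ℝ) ^ b ≤ (r + 1) * n * log n * (n : ℝ) ^ b := by gcongr
    _ = (r + 1) * (log n / (n : ℝ) ^ (-(b + 1))) := by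
        rw [rpow_neg hn'.le, div_inv_eq_mul, rpow_add_one hn'.ne']
        ring

end Asymptotics

section Threshold

open Real

lemma exists_pos_add_mul_add_lt {x y z : ℝ} (h : x * y < z) : ∃ δ > 0, (x + δ) * (y + δ) < z := by
  have hcont : Tendsto (fun δ => (x + δ) * (y + δ)) (𝓝[>] 0) (𝓝 (x * y)) := by
    have : Continuous fun δ => (x + δ) * (y + δ) := by fun_prop
    simpa using (this.tendsto 0).mono_left nhdsWithin_le_nhds
  obtain ⟨δ, hδ, hpos⟩ := ((hcont.eventually_lt_const h).and self_mem_nhdsWithin).exists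
  exact ⟨δ, hpos, hδ⟩

lemma lt_one_of_le_sub_one_div {x p : ℝ} (hx : 0 < x) (hp : p ≤ (x - 1) / x) : p < 1 :=
  hp.trans_lt ((div_lt_one hx).2 (sub_one_lt x))

lemma div_one_sub_le_sub_one {x p : ℝ} (hx : 0 < x) (hp : p ≤ (x - 1) / x) :
    p / (1 - p) ≤ x - 1 := by
  have hp₁ := lt_one_of_le_sub_one_div hx hp
  rw [le_div_iff₀ hx] at hp
  rw [div_le_iff₀ (sub_pos.2 hp₁)]
  linarith

lemma log_one_add_div_one_sub {p : ℝ} (hp : p ≠ 1) : log (1 + p / (1 - p)) = -log (1 - p) := by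
  rw [one_add_div (sub_ne_zero.2 hp.symm), sub_add_cancel, one_div, log_inv]

lemma expNForced_div_expN_le_exp_add {k n d q m : ℕ} {c γ y : ℝ} (t : Fin n → Fin d) (hn : 0 < n)
    (hkn : k ≤ n) (hd : 2 ≤ d ^ k) (hq : q < d ^ k) (hc : q / ((d : ℝ) ^ k - q) ≤ c)
    (hy₀ : 0 ≤ y) (hy₁ : y < 1) (hlarge : ∀ s ≤ n, (n : ℝ) ^ γ < s →
      n.choose s / (d : ℝ) ^ s * (1 + c * (s / n : ℝ) ^ k) ^ m ≤ y ^ s) :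
    expNForced k n d q m t / expN k n d q m ≤
      exp (c * (m * (n : ℝ) ^ ((γ - 1) * k))) + y * (1 - y)⁻¹ := by
  have hc₀ : 0 ≤ c :=
    (div_nonneg q.cast_nonneg (sub_nonneg.2 (by exact_mod_cast hq.le))).trans hc
  refine (expNForced_div_expN_le_expect t hkn hd hq hc).trans ?_
  refine expect_card_agreementSet_le_add t (G := fun s => (1 + c * (s / n : ℝ) ^ k) ^ m)
    (fun s => by positivity) (by positivity : 0 ≤ (n : ℝ) ^ γ) hy₀ hy₁
    (fun s hs => one_add_mul_div_pow_pow_le_exp hn hc₀ hs) ?_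
  simpa only [Fintype.card_fin] using hlarge

lemma exists_tendsto_one_eventually_expNForced_div_expN_le {k : ℕ} (hk : 2 ≤ k) {α r p : ℝ}
    (hα : 1 / (k : ℝ) < α) (hr : 0 ≤ r) (hp₀ : 0 ≤ p) (hp₁ : p ≤ ((k : ℝ) - 1) / k)
    (hrp : r * -log (1 - p) < α) :
    ∃ u : ℕ → ℝ, Tendsto u atTop (𝓝 1) ∧ ∀ᶠ n in atTop, ∀ t : Fin n → Fin (dOf α n),
      expNForced k n (dOf α n) (qOf p k (dOf α n)) (mOf r n) t /
        expN k n (dOf α n) (qOf p k (dOf α n)) (mOf r n) ≤ u n := by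
  have hk₀ : (0 : ℝ) < k := by positivity
  have hα₀ : 0 < α := (by positivity : 0 < 1 / (k : ℝ)).trans hα
  have hp' := lt_one_of_le_sub_one_div hk₀ hp₁
  rw [← log_one_add_div_one_sub hp'.ne] at hrp
  set c := p / (1 - p)
  have hc₀ : 0 ≤ c := div_nonneg hp₀ (sub_nonneg.2 hp'.le)
  have hc : c ≤ k - 1 := div_one_sub_le_sub_one hk₀ hp₁
  obtain ⟨δ, hδ, hrate⟩ := exists_pos_add_mul_add_lt hrp
  obtain ⟨γ, hγα, hγk⟩ := exists_between (show 1 - α < 1 - 1 / k by linarith)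
  have hexp : (γ - 1) * k < -1 := by
    rw [← lt_div_iff₀ hk₀, neg_div]
    linarith
  obtain ⟨y, hy₀, hy, htail⟩ := exists_tendsto_zero_forall_choose_div_pow_mul_le hk
    (by positivity : 0 ≤ c + δ) (by linarith : 1 - γ < α) hrate
    fun x hx => log_one_add_add_mul_pow_le hc₀ hc hδ.le hx.1 hx.2
  refine ⟨fun n => exp ((c + δ) * (mOf r n * (n : ℝ) ^ ((γ - 1) * k))) + y n * (1 - y n)⁻¹,
    ?_, ?_⟩
  · simpa using (((tendsto_mOf_mul_rpow hr hexp).const_mul (c + δ)).rexp).add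
      (hy.mul ((hy.const_sub 1).inv₀ (by simp)))
  have hk' : k ≠ 0 := by omega
  filter_upwards [eventually_gt_atTop 0, eventually_ge_atTop k,
    (tendsto_dOf_pow_atTop hα₀ hk').eventually_ge_atTop 2, eventually_qOf_lt hα₀ hk' hp₀ hp',
    (tendsto_qOf_div_pow_sub hα₀ hk' hp₀ hp').eventually_le_const (lt_add_of_pos_right c hδ),
    hy.eventually_lt_const one_pos, eventually_mOf_le hr (lt_add_of_pos_right r hδ)]
    with n hn hkn hd hq hqc hy₁ hm t
  exact expNForced_div_expN_le_exp_add t hn hkn (by exact_mod_cast hd) hq hqc (hy₀ n) hy₁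
    fun s hsn hs => htail n s _ _ hsn hs (Nat.le_ceil _) hm

end Threshold

end RB

/-- **Forcing a solution does not change the expected number of solutions below the
threshold**: for an integer `k ≥ 2` and real constants `α > 1/k`, `r > 0`,
`0 < p ≤ (k-1)/k` with `r < r_cr = -α / ln (1-p)`, and for any fixed total assignment
`t` (one for each `n`), the ratio `E_f[N]/E[N]` between the expected number of solutions
of instances of `RB(k,n,α,r,p)` forced to have solution `t` (the model conditioned on
`t` being a solution) and the expected number of solutions of unforced instances tends
to `1` as `n → ∞`. -/
theorem rb_forced_expected_solutions (k : ℕ) (hk : 2 ≤ k) (α r p : ℝ)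
    (hα : 1 / (k : ℝ) < α) (hr : 0 < r) (hp0 : 0 < p) (hp1 : p ≤ ((k : ℝ) - 1) / k)
    (hrcr : r < -α / Real.log (1 - p))
    (t : ∀ n : ℕ, Fin n → Fin (RB.dOf α n)) :
    Tendsto
      (fun n : ℕ =>
        RB.expNForced k n (RB.dOf α n) (RB.qOf p k (RB.dOf α n)) (RB.mOf r n) (t n) /
          RB.expN k n (RB.dOf α n) (RB.qOf p k (RB.dOf α n)) (RB.mOf r n))
      atTop (𝓝 1) := by
  have hk₀ : (0 : ℝ) < k := by positivity
  have hα₀ : 0 < α := (by positivity : 0 < 1 / (k : ℝ)).trans hα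
  have hp' : p < 1 := RB.lt_one_of_le_sub_one_div hk₀ hp1
  have hlog : Real.log (1 - p) < 0 := Real.log_neg (sub_pos.2 hp') (sub_lt_self 1 hp0)
  have hrate : r * -Real.log (1 - p) < α := by
    rw [lt_div_iff_of_neg hlog] at hrcr
    linarith
  obtain ⟨u, hu, hle⟩ :=
    RB.exists_tendsto_one_eventually_expNForced_div_expN_le hk hα hr.le hp0.le hp1 hrate
  have hk' : k ≠ 0 := by omega
  refine tendsto_of_tendsto_of_tendsto_of_le_of_le' tendsto_const_nhds hu ?_
    (hle.mono fun n h => h (t n))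
  filter_upwards [eventually_ge_atTop k, RB.eventually_qOf_lt hα₀ hk' hp0.le hp'] with n hkn hq
  exact RB.one_le_expNForced_div_expN (t n) (pos_of_ne_zero fun hd => by simp [hd, hk'] at hq)
    hkn hq
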